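/- Kouchnirenko–Bernstein theorem (upper bound, two variables): if f, g ∈ ℂ[X,Y] are quasi-convenient and coprime, then the sum over all common zeros P ∈ ℂ² of the intersection multiplicities (f,g)_P is at most ν∞(f,g) = Area(Δ∞(fg)) − Area(Δ∞(f)) − Area(Δ∞(g)). -/

import Mathlib

open MvPolynomial MeasureTheory Pointwise

noncomputable section

/-- Polynomials in two complex variables. -/
abbrev P2 := MvPolynomial (Fin 2) ℂ

/-- The `w`-weight of a monomial exponent. -/
def wt (w : ℝ × ℝ) (m : Fin 2 →₀ ℕ) : ℝ := w.1 * (m 0 : ℝ) + w.2 * (m 1 : ℝ)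

/-- `d_w(f)`: maximal `w`-weight of a monomial of `f`. -/
def dw (w : ℝ × ℝ) (f : P2) : ℝ := sSup (wt w '' (f.support : Set (Fin 2 →₀ ℕ)))

open Classical in
/-- The initial form `init(f, w)`: sum of the monomials of `f` of maximal `w`-weight. -/
def initForm (w : ℝ × ℝ) (f : P2) : P2 :=
  ∑ m ∈ f.support, if wt w m = dw w f then monomial m (f.coeff m) else 0

/-- `f` is quasi-convenient: some pure power of `X` and some pure power of `Y`
occur in `f` with nonzero coefficient. -/
def QuasiConvenient (f : P2) : Prop :=
  (∃ a : ℕ, f.coeff (Finsupp.single 0 a) ≠ 0) ∧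
  (∃ b : ℕ, f.coeff (Finsupp.single 1 b) ≠ 0)

/-- The Newton diagram at infinity `Δ∞(f)`. -/
def newton (f : P2) : Set (ℝ × ℝ) :=
  convexHull ℝ ({(0, 0)} ∪ {p : ℝ × ℝ | ∃ m ∈ f.support, p = ((m 0 : ℝ), (m 1 : ℝ))})

/-- Area (2-dimensional Lebesgue measure) of a plane set. -/
def area (S : Set (ℝ × ℝ)) : ℝ := (volume S).toReal

/-- `ν∞(f, g)`. -/
def nuInf (f g : P2) : ℝ := area (newton (f * g)) - area (newton f) - area (newton g)

/-- `f` is nondegenerate at infinity. -/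
def NondegAtInf (f : P2) : Prop :=
  ∀ w : ℝ × ℝ, (0 < w.1 ∨ 0 < w.2) →
    ¬ ∃ x y : ℂ, x ≠ 0 ∧ y ≠ 0 ∧
      eval ![x, y] (initForm w f) = 0 ∧
      eval ![x, y] (pderiv 0 (initForm w f)) = 0 ∧
      eval ![x, y] (pderiv 1 (initForm w f)) = 0

/-- The pair `(f, g)` is nondegenerate at infinity. -/
def PairNondegAtInf (f g : P2) : Prop :=
  ∀ w : ℝ × ℝ, (0 < w.1 ∨ 0 < w.2) →
    ¬ ∃ x y : ℂ, x ≠ 0 ∧ y ≠ 0 ∧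
      eval ![x, y] (initForm w f) = 0 ∧ eval ![x, y] (initForm w g) = 0

/-- `g` and `h` have no common nonunit factor. -/
def CoprimeDiv (g h : P2) : Prop := ∀ d : P2, d ∣ g → d ∣ h → IsUnit d

/-- `f` is nearly irreducible: positive degree, and any two nonconstant factors
have a common zero in `ℂ²`. -/
def NearlyIrreducible (f : P2) : Prop :=
  0 < f.totalDegree ∧
  ∀ g h : P2, g ∣ f → h ∣ f → 0 < g.totalDegree → 0 < h.totalDegree →
    ∃ x y : ℂ, eval ![x, y] g = 0 ∧ eval ![x, y] h = 0

/-- The maximal ideal of polynomials vanishing at a point `P ∈ ℂ²`. -/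
def mIdeal (Pt : ℂ × ℂ) : Ideal P2 := RingHom.ker (eval ![Pt.1, Pt.2] : P2 →+* ℂ)

instance (Pt : ℂ × ℂ) : (mIdeal Pt).IsPrime := RingHom.ker_isPrime _

/-- Intersection multiplicity `(f, g)_P`: the `ℂ`-dimension of the quotient of the
local ring of `ℂ²` at `P` by the ideal generated by `f` and `g`. -/
def interMult (f g : P2) (Pt : ℂ × ℂ) : ℕ :=
  Module.finrank ℂ
    (Localization.AtPrime (mIdeal Pt) ⧸
      Ideal.span {algebraMap P2 (Localization.AtPrime (mIdeal Pt)) f,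
                  algebraMap P2 (Localization.AtPrime (mIdeal Pt)) g})

lemma wt_add (w : ℝ × ℝ) (m n : Fin 2 →₀ ℕ) : wt w (m + n) = wt w m + wt w n := by
  simp [wt]; ring

lemma le_dw (w : ℝ × ℝ) (f : P2) {m : Fin 2 →₀ ℕ} (hm : m ∈ f.support) : wt w m ≤ dw w f :=
  le_csSup ((f.support.finite_toSet.image _).bddAbove) ⟨m, hm, rfl⟩

lemma exists_dw (w : ℝ × ℝ) {f : P2} (hf : f ≠ 0) : ∃ m ∈ f.support, wt w m = dw w f := by
  have hne : (wt w '' (f.support : Set (Fin 2 →₀ ℕ))).Nonempty := by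
    have := MvPolynomial.support_nonempty.2 hf
    exact (Finset.coe_nonempty.2 this).image _
  obtain ⟨m, hm, h⟩ := hne.csSup_mem (f.support.finite_toSet.image _)
  exact ⟨m, hm, h⟩

/-- a refined top monomial -/
lemma exists_top (w : ℝ × ℝ) {f : P2} (hf : f ≠ 0) : ∃ m ∈ f.support, wt w m = dw w f ∧
    ∀ n ∈ f.support, wt w n = dw w f → n 0 ≤ m 0 ∧ (n 0 = m 0 → n 1 ≤ m 1) := by
  classical
  obtain ⟨m₀, hm₀, h₀⟩ := exists_dw w hf
  have hs : (f.support.filter (fun m => wt w m = dw w f)).Nonempty :=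
    ⟨m₀, by simp only [Finset.mem_filter]; exact ⟨hm₀, h₀⟩⟩
  obtain ⟨m, hm, hmax⟩ := Finset.exists_max_image _ (fun m => toLex (m 0, m 1)) hs
  rw [Finset.mem_filter] at hm
  refine ⟨m, hm.1, hm.2, fun n hn hn' => ?_⟩
  have := hmax n (by rw [Finset.mem_filter]; exact ⟨hn, hn'⟩)
  rw [Prod.Lex.toLex_le_toLex] at this
  dsimp only at this
  omega

/-- some monomial of `f * g` has weight `d_w f + d_w g`. -/
lemma exists_dw_mul (w : ℝ × ℝ) {f g : P2} (hf : f ≠ 0) (hg : g ≠ 0) :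
    ∃ m ∈ (f * g).support, wt w m = dw w f + dw w g := by
  classical
  obtain ⟨m, hm, hmw, hmt⟩ := exists_top w hf
  obtain ⟨n, hn, hnw, hnt⟩ := exists_top w hg
  refine ⟨m + n, ?_, by rw [wt_add, hmw, hnw]⟩
  rw [MvPolynomial.mem_support_iff, MvPolynomial.coeff_mul,
    Finset.sum_eq_single (m, n)]
  · exact mul_ne_zero (MvPolynomial.mem_support_iff.1 hm) (MvPolynomial.mem_support_iff.1 hn)
  · rintro ⟨a, b⟩ hab hne
    rw [Finset.HasAntidiagonal.mem_antidiagonal] at hab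
    dsimp only at hab ⊢
    by_contra hcon
    have ha : a ∈ f.support := MvPolynomial.mem_support_iff.2 (left_ne_zero_of_mul hcon)
    have hb : b ∈ g.support := MvPolynomial.mem_support_iff.2 (right_ne_zero_of_mul hcon)
    have h1 := le_dw w f ha
    have h2 := le_dw w g hb
    have h3 : wt w a + wt w b = wt w m + wt w n := by rw [← wt_add, ← wt_add, hab]
    have ha' : wt w a = dw w f := by linarith
    have hb' : wt w b = dw w g := by linarith
    have h4 := hmt a ha ha'
    have h5 := hnt b hb hb'
    have e0 : a 0 + b 0 = m 0 + n 0 := by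
      simpa using DFunLike.congr_fun hab 0
    have e1 : a 1 + b 1 = m 1 + n 1 := by
      simpa using DFunLike.congr_fun hab 1
    apply hne
    have : a 0 = m 0 ∧ a 1 = m 1 ∧ b 0 = n 0 ∧ b 1 = n 1 := by omega
    ext i
    · fin_cases i
      · exact this.1
      · exact this.2.1
    · fin_cases i
      · exact this.2.2.1
      · exact this.2.2.2
  · intro h
    exact absurd ((Finset.HasAntidiagonal.mem_antidiagonal (n := m + n) (a := (m, n))).2 rfl) h

lemma dw_nonneg {f : P2} (hf : QuasiConvenient f) {w : ℝ × ℝ} (hw : 0 < w.1 ∨ 0 < w.2) :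
    0 ≤ dw w f := by
  obtain ⟨⟨a, ha⟩, ⟨b, hb⟩⟩ := hf
  rcases hw with h | h
  · refine le_trans ?_ (le_dw w f (MvPolynomial.mem_support_iff.2 ha))
    simp [wt]; positivity
  · refine le_trans ?_ (le_dw w f (MvPolynomial.mem_support_iff.2 hb))
    simp [wt]; positivity

lemma QuasiConvenient.ne_zero {f : P2} (hf : QuasiConvenient f) : f ≠ 0 := by
  rintro rfl
  obtain ⟨⟨a, ha⟩, _⟩ := hf
  simp at ha

/-- support function of the polygon `iA + jB + tT` -/
def hfun (f g : P2) (t i j : ℕ) (w : ℝ × ℝ) : ℝ :=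
  i * dw w f + j * dw w g + t * max w.1 w.2

/-- lattice points of the polygon `iA + jB + tT` -/
def SS (f g : P2) (t i j : ℕ) : Set (Fin 2 →₀ ℕ) :=
  {m | ∀ w : ℝ × ℝ, (0 < w.1 ∨ 0 < w.2) → wt w m ≤ hfun f g t i j w}

/-- polynomials supported in `iA + jB + tT` -/
abbrev LL (f g : P2) (t i j : ℕ) : Submodule ℂ P2 := restrictSupport ℂ (SS f g t i j)

lemma finsupp_bdd_finite (C : ℕ) : {m : Fin 2 →₀ ℕ | m 0 + m 1 ≤ C}.Finite := by
  have : Set.InjOn (fun m : Fin 2 →₀ ℕ => (m 0, m 1)) {m : Fin 2 →₀ ℕ | m 0 + m 1 ≤ C} := by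
    intro m _ n _ h
    ext i
    simp only [Prod.mk.injEq] at h
    fin_cases i
    · exact h.1
    · exact h.2
  refine Set.Finite.of_finite_image ?_ this
  refine ((Set.finite_Iic C).prod (Set.finite_Iic C)).subset ?_
  rintro _ ⟨m, hm, rfl⟩
  simp only [Set.mem_ofPred_eq] at hm
  simp only [Set.mem_prod, Set.mem_Iic]
  omega

lemma SS_finite (f g : P2) (t i j : ℕ) : (SS f g t i j).Finite := by
  obtain ⟨C, hC⟩ := exists_nat_ge (hfun f g t i j (1, 1))
  refine (finsupp_bdd_finite C).subset fun m hm => ?_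
  have := (hm (1, 1) (by simp)).trans hC
  simp only [wt, one_mul] at this
  exact_mod_cast this

instance (f g : P2) (t i j : ℕ) : Module.Finite ℂ (LL f g t i j) := by
  have := (SS_finite f g t i j).to_subtype
  exact Module.Finite.of_basis (basisRestrictSupport ℂ (SS f g t i j))

lemma finrank_LL (f g : P2) (t i j : ℕ) :
    Module.finrank ℂ (LL f g t i j) = Nat.card (SS f g t i j) := 
  Module.finrank_eq_nat_card_basis (basisRestrictSupport ℂ (SS f g t i j))

lemma mul_f_mem {f g p : P2} {t i j : ℕ} (hp : p ∈ LL f g t i j) : f * p ∈ LL f g t (i+1) j := by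
  classical
  rw [mem_restrictSupport_iff] at hp ⊢
  intro m hm w hw
  obtain ⟨a, ha, b, hb, rfl⟩ := Finset.mem_add.1 (MvPolynomial.support_mul f p hm)
  have h1 := le_dw w f ha
  have h2 := hp hb w hw
  rw [wt_add]
  simp only [hfun] at h2 ⊢
  push_cast
  linarith

lemma mul_g_mem {f g p : P2} {t i j : ℕ} (hp : p ∈ LL f g t i j) : g * p ∈ LL f g t i (j+1) := by
  classical
  rw [mem_restrictSupport_iff] at hp ⊢
  intro m hm w hw
  obtain ⟨a, ha, b, hb, rfl⟩ := Finset.mem_add.1 (MvPolynomial.support_mul g p hm)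
  have h1 := le_dw w g ha
  have h2 := hp hb w hw
  rw [wt_add]
  simp only [hfun] at h2 ⊢
  push_cast
  linarith

lemma of_mul_g_mem {f g r : P2} (hg : g ≠ 0) {t i j : ℕ} (hp : g * r ∈ LL f g t i (j+1)) :
    r ∈ LL f g t i j := by
  rw [mem_restrictSupport_iff] at hp ⊢
  intro m hm w hw
  have hr : r ≠ 0 := by rintro rfl; simp at hm
  obtain ⟨n, hn, hnw⟩ := exists_dw_mul w hg hr
  have h1 := le_dw w r hm
  have h2 := hp hn w hw
  rw [hnw] at h2
  simp only [hfun] at h2 ⊢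
  push_cast at h2
  linarith

lemma low_degree_mem {f g p : P2} (hf : QuasiConvenient f) (hg : QuasiConvenient g) {t i j : ℕ}
    (hp : p.totalDegree ≤ t) : p ∈ LL f g t i j := by
  rw [mem_restrictSupport_iff]
  intro m hm w hw
  have h1 := (MvPolynomial.le_totalDegree hm).trans hp
  rw [Finsupp.sum_fintype _ _ (by simp)] at h1
  simp only [Fin.sum_univ_two] at h1
  have h1' : (m 0 : ℝ) + m 1 ≤ t := by exact_mod_cast h1
  have h2 := dw_nonneg hf hw
  have h3 := dw_nonneg hg hw
  have h4 : 0 ≤ max w.1 w.2 := by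
    rcases hw with h | h
    · exact h.le.trans (le_max_left _ _)
    · exact h.le.trans (le_max_right _ _)
  have h5 : wt w m ≤ t * max w.1 w.2 := by
    have a1 := mul_le_mul_of_nonneg_right (le_max_left w.1 w.2) (Nat.cast_nonneg (α := ℝ) (m 0))
    have a2 := mul_le_mul_of_nonneg_right (le_max_right w.1 w.2) (Nat.cast_nonneg (α := ℝ) (m 1))
    have a3 := mul_le_mul_of_nonneg_right h1' h4
    simp only [wt]
    linarith
  simp only [hfun]
  have := mul_nonneg (Nat.cast_nonneg (α := ℝ) i) h2
  have := mul_nonneg (Nat.cast_nonneg (α := ℝ) j) h3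
  linarith

lemma finrank_map_mul {f : P2} (hf : f ≠ 0) (U : Submodule ℂ P2) :
    Module.finrank ℂ (U.map (LinearMap.mulLeft ℂ f)) = Module.finrank ℂ U :=
  (LinearEquiv.finrank_eq (Submodule.equivMapOfInjective (LinearMap.mulLeft ℂ f)
    (mul_right_injective₀ hf) U)).symm

/-- the basic dimension inequality -/
lemma dim_step {f g : P2} (hf : f ≠ 0) (hg : g ≠ 0) (hco : CoprimeDiv f g) {V : Type*}
    [AddCommGroup V] [Module ℂ V] (φ : P2 →ₗ[ℂ] V)
    (hφf : ∀ p, φ (f * p) = 0) (hφg : ∀ p, φ (g * p) = 0) (t i j : ℕ)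
    (hsurj : (LL f g t (i+1) (j+1)).map φ = ⊤) :
    Module.finrank ℂ V + Nat.card (SS f g t i (j+1)) + Nat.card (SS f g t (i+1) j) ≤
      Nat.card (SS f g t (i+1) (j+1)) + Nat.card (SS f g t i j) := by
  simp only [← finrank_LL]
  set U := LL f g t (i+1) (j+1)
  set W1 := (LL f g t i (j+1)).map (LinearMap.mulLeft ℂ f) with hW1
  set W2 := (LL f g t (i+1) j).map (LinearMap.mulLeft ℂ g) with hW2
  have e1 : Module.finrank ℂ W1 = _ := finrank_map_mul hf _
  have e2 : Module.finrank ℂ W2 = _ := finrank_map_mul hg _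
  have l1 : W1 ≤ U := by
    rintro _ ⟨p, hp, rfl⟩
    exact mul_f_mem hp
  have l2 : W2 ≤ U := by
    rintro _ ⟨p, hp, rfl⟩
    exact mul_g_mem hp
  have k1 : W1 ≤ LinearMap.ker φ := by
    rintro _ ⟨p, hp, rfl⟩
    exact hφf p
  have k2 : W2 ≤ LinearMap.ker φ := by
    rintro _ ⟨p, hp, rfl⟩
    exact hφg p
  have hinf : W1 ⊓ W2 ≤ (LL f g t i j).map (LinearMap.mulLeft ℂ (f * g)) := by
    rintro x ⟨⟨p, hp, rfl⟩, ⟨q, hq, hpq⟩⟩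
    simp only [LinearMap.mulLeft_apply] at hpq ⊢
    have hd : g ∣ f * p := ⟨q, hpq.symm⟩
    have hrel : IsRelPrime g f := fun d h1 h2 => hco d h2 h1
    obtain ⟨r, rfl⟩ := hrel.dvd_of_dvd_mul_left hd
    exact ⟨r, of_mul_g_mem hg hp, by simp⟩
  have e3 : Module.finrank ℂ ((LL f g t i j).map (LinearMap.mulLeft ℂ (f * g))) = _ :=
    finrank_map_mul (mul_ne_zero hf hg) _
  have e4 := Submodule.finrank_mono hinf
  have e5 := Submodule.finrank_sup_add_finrank_inf_eq W1 W2
  -- rank nullity on U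
  have e6 := LinearMap.finrank_range_add_finrank_ker (φ.domRestrict U)
  have e7 : Module.finrank ℂ (LinearMap.range (φ.domRestrict U)) = Module.finrank ℂ V := by
    rw [LinearMap.range_domRestrict, hsurj, finrank_top]
  have e8 : Module.finrank ℂ (W1 ⊔ W2 : Submodule ℂ P2) ≤
      Module.finrank ℂ (LinearMap.ker (φ.domRestrict U)) := by
    have : (W1 ⊔ W2) ≤ (LinearMap.ker (φ.domRestrict U)).map U.subtype := by
      intro x hx
      exact ⟨⟨x, sup_le l1 l2 hx⟩, sup_le k1 k2 hx, rfl⟩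
    refine (Submodule.finrank_mono this).trans ?_
    exact Submodule.finrank_map_le _ _
  omega

lemma telescoping (s : ℕ → ℕ → ℤ) (d : ℤ)
    (h : ∀ i j, d + s i (j+1) + s (i+1) j ≤ s (i+1) (j+1) + s i j) (N : ℕ) :
    N ^ 2 * d + s N 0 + s 0 N ≤ s N N + s 0 0 := by
  have key : ∀ j n : ℕ, n * d + s n j + s 0 (j+1) ≤ s n (j+1) + s 0 j := by
    intro j n
    induction n with
    | zero => simp; linarith
    | succ n ih => have := h n j; push_cast; linarith
  have key2 : ∀ n : ℕ, n * (N * d) + s N 0 + s 0 n ≤ s N n + s 0 0 := by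
    intro n
    induction n with
    | zero => simp
    | succ n ih => have := key n N; push_cast; linarith
  have := key2 N
  linarith

open Filter Topology in
lemma count_tendsto (K : Set (ℝ × ℝ)) (hK : IsCompact K) (hc : Convex ℝ K) :
    Tendsto (fun N : ℕ => (Nat.card {m : Fin 2 → ℤ // ((m 0 : ℝ) / N, (m 1 : ℝ) / N) ∈ K} : ℝ)
      / N ^ 2) atTop (𝓝 (area K)) := by
  set e := ContinuousLinearEquiv.finTwoArrow ℝ ℝ with he
  have hcomp : IsCompact (e ⁻¹' K) := e.toHomeomorph.isCompact_preimage.2 hK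
  have hconv : Convex ℝ (e ⁻¹' K) := hc.linear_preimage e.toLinearMap
  have hvol : volume.real (e ⁻¹' K) = area K := by
    have := (volume_preserving_finTwoArrow ℝ).measure_preimage hK.measurableSet.nullMeasurableSet
    simp only [area, Measure.real]
    rw [← this]
    rfl
  have key := tendsto_card_div_pow_atTop_volume (e ⁻¹' K) hcomp.isBounded hcomp.measurableSet
    (hconv.addHaar_frontier volume)
  rw [hvol] at key
  refine key.congr' ?_
  filter_upwards [eventually_gt_atTop 0] with N hN
  have hN' : (N : ℝ) ≠ 0 := by positivity
  have : NeZero N := ⟨hN.ne'⟩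
  simp only [Fintype.card_fin]
  congr 2
  symm
  refine Nat.card_eq_of_bijective
    (fun m => ⟨fun i => (m.1 i : ℝ) / N, ?_, ?_⟩) ⟨?_, ?_⟩
  · exact m.2
  · rw [← Submodule.coe_pointwise_smul, SetLike.mem_coe, BoxIntegral.unitPartition.mem_smul_span_iff]
    intro i
    exact ⟨m.1 i, by simp; field_simp⟩
  · rintro ⟨m, hm⟩ ⟨n, hn⟩ h
    have h' := congrArg Subtype.val h
    apply Subtype.ext
    funext i
    have := congrFun h' i
    dsimp only at this
    field_simp at this
    exact_mod_cast this
  · rintro ⟨v, hv, hv'⟩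
    rw [← Submodule.coe_pointwise_smul, SetLike.mem_coe, BoxIntegral.unitPartition.mem_smul_span_iff] at hv'
    choose m hm using hv'
    have hm' : ∀ i, (m i : ℝ) / N = v i := by
      intro i
      have := hm i
      simp at this
      rw [this]; field_simp
    refine ⟨⟨m, ?_⟩, ?_⟩
    · rw [hm', hm']
      exact hv
    · apply Subtype.ext
      funext i
      exact hm' i

lemma count_finite (K : Set (ℝ × ℝ)) (hK : IsCompact K) {N : ℕ} (hN : 0 < N) :
    Finite {m : Fin 2 → ℤ // ((m 0 : ℝ) / N, (m 1 : ℝ) / N) ∈ K} := by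
  obtain ⟨C, hC⟩ := hK.isBounded.exists_norm_le
  have hN' : (0 : ℝ) < N := by positivity
  refine Set.Finite.to_subtype (s := {m : Fin 2 → ℤ | ((m 0 : ℝ) / N, (m 1 : ℝ) / N) ∈ K})
    ((Set.finite_Icc (fun _ : Fin 2 => -⌈C * N⌉) (fun _ => ⌈C * N⌉)).subset ?_)
  intro m hm
  have h1 := hC _ hm
  rw [Prod.norm_def, max_le_iff] at h1
  simp only [Real.norm_eq_abs, abs_div, Nat.abs_cast, div_le_iff₀ hN'] at h1
  have h2 : ∀ i, |(m i : ℝ)| ≤ C * N := by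
    intro i
    fin_cases i
    · exact h1.1
    · exact h1.2
  have h3 : ∀ i, |m i| ≤ ⌈C * N⌉ := by
    intro i
    have : |(m i : ℝ)| ≤ (⌈C * N⌉ : ℤ) := (h2 i).trans (Int.le_ceil _)
    exact_mod_cast this
  exact ⟨fun i => (abs_le.1 (h3 i)).1, fun i => (abs_le.1 (h3 i)).2⟩

lemma newton_compact (f : P2) : IsCompact (newton f) := by
  refine Set.Finite.isCompact_convexHull (𝕜 := ℝ) ?_
  refine (Set.finite_singleton _).union ?_
  refine (f.support.finite_toSet.image (fun m => ((m 0 : ℝ), (m 1 : ℝ)))).subset ?_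
  rintro p ⟨m, hm, rfl⟩
  exact ⟨m, hm, rfl⟩

lemma newton_convex (f : P2) : Convex ℝ (newton f) := convex_convexHull _ _

lemma zero_mem_newton (f : P2) : ((0 : ℝ), (0 : ℝ)) ∈ newton f :=
  subset_convexHull _ _ (Or.inl rfl)

lemma mem_newton {f : P2} {m : Fin 2 →₀ ℕ} (hm : m ∈ f.support) :
    ((m 0 : ℝ), (m 1 : ℝ)) ∈ newton f :=
  subset_convexHull _ _ (Or.inr ⟨m, hm, rfl⟩)

lemma half_convex (w : ℝ × ℝ) (c : ℝ) : Convex ℝ {x : ℝ × ℝ | w.1 * x.1 + w.2 * x.2 ≤ c} := by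
  intro x hx y hy a b ha hb hab
  simp only [Set.mem_ofPred_eq, Prod.fst_add, Prod.snd_add, Prod.smul_fst, Prod.smul_snd,
    smul_eq_mul] at *
  have h1 := mul_le_mul_of_nonneg_left hx ha
  have h2 := mul_le_mul_of_nonneg_left hy hb
  have h3 : a * c + b * c = c := by rw [← add_mul, hab, one_mul]
  linarith

lemma newton_le {f : P2} {w : ℝ × ℝ} {c : ℝ} (h0 : 0 ≤ c) (h : ∀ m ∈ f.support, wt w m ≤ c)
    {x : ℝ × ℝ} (hx : x ∈ newton f) : w.1 * x.1 + w.2 * x.2 ≤ c := by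
  refine convexHull_min (t := {x : ℝ × ℝ | w.1 * x.1 + w.2 * x.2 ≤ c}) ?_ (half_convex w c) hx
  rintro p (hp | ⟨m, hm, rfl⟩)
  · rw [Set.mem_singleton_iff] at hp
    subst hp
    simpa using h0
  · exact h m hm

lemma newton_nonneg {f : P2} {x : ℝ × ℝ} (hx : x ∈ newton f) : 0 ≤ x.1 ∧ 0 ≤ x.2 := by
  constructor
  · have := newton_le (w := (-1, 0)) le_rfl (fun m _ => by simp [wt]) hx
    simpa using this
  · have := newton_le (w := (0, -1)) le_rfl (fun m _ => by simp [wt]) hx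
    simpa using this

/-- lower bound on lattice points, generic form -/
lemma lower_count {f : P2} (hf : QuasiConvenient f) {N : ℕ} (hN : 0 < N)
    (S : Set (Fin 2 →₀ ℕ)) (hS : S.Finite)
    (h : ∀ m : Fin 2 →₀ ℕ, (∀ w : ℝ × ℝ, (0 < w.1 ∨ 0 < w.2) → wt w m ≤ N * dw w f) → m ∈ S) :
    Nat.card {m : Fin 2 → ℤ // ((m 0 : ℝ) / N, (m 1 : ℝ) / N) ∈ newton f} ≤ Nat.card S := by
  have := hS.to_subtype
  have hN' : (0 : ℝ) < N := by positivity
  have hpos : ∀ m : {m : Fin 2 → ℤ // ((m 0 : ℝ) / N, (m 1 : ℝ) / N) ∈ newton f},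
      ∀ i, 0 ≤ m.1 i := by
    intro m i
    have := newton_nonneg m.2
    simp only [le_div_iff₀ hN', zero_mul] at this
    fin_cases i
    · exact_mod_cast this.1
    · exact_mod_cast this.2
  refine Nat.card_le_card_of_injective
    (fun m => ⟨Finsupp.equivFunOnFinite.symm (fun i => (m.1 i).toNat), h _ ?_⟩) ?_
  · intro w hw
    have h1 := newton_le (dw_nonneg hf hw) (fun n hn => le_dw w f hn) m.2
    have c : ∀ i, (((m.1 i).toNat : ℕ) : ℝ) = m.1 i := by
      intro i
      have := Int.toNat_of_nonneg (hpos m i)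
      exact_mod_cast this
    simp only [wt, Finsupp.equivFunOnFinite_symm_apply_apply, c]
    dsimp only at h1
    have h2 := mul_le_mul_of_nonneg_left h1 hN'.le
    calc _ = N * (w.1 * ((m.1 0 : ℝ) / N) + w.2 * ((m.1 1 : ℝ) / N)) := by field_simp
      _ ≤ _ := h2
  · intro m n hmn
    simp only [Subtype.mk.injEq, EmbeddingLike.apply_eq_iff_eq] at hmn
    ext i
    have h1 := congrFun hmn i
    have h2 := hpos m i
    have h3 := hpos n i
    omega

lemma upper_count {f g : P2} (hf : QuasiConvenient f) (hg : QuasiConvenient g) {N t : ℕ}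
    (hN : 0 < N) {δ : ℝ} (hδ : 0 < δ) (hNδ : t ≤ N * δ) :
    Nat.card (SS f g t N N) ≤ Nat.card {m : Fin 2 → ℤ // ((m 0 : ℝ) / N, (m 1 : ℝ) / N) ∈
      Metric.cthickening δ (newton (f * g))} := by
  have hcpt := (newton_compact (f * g)).cthickening (r := δ)
  have := count_finite _ hcpt hN
  have hN' : (0 : ℝ) < N := by positivity
  refine Nat.card_le_card_of_injective (fun m => ⟨fun i => (m.1 i : ℤ), ?_⟩) ?_
  · by_contra hcon
    obtain ⟨l, u, hl, hu⟩ := geometric_hahn_banach_closed_point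
      ((newton_convex (f * g)).cthickening δ) hcpt.isClosed hcon
    obtain ⟨w, hw⟩ : ∃ w : ℝ × ℝ, ∀ x : ℝ × ℝ, l x = w.1 * x.1 + w.2 * x.2 := by
      refine ⟨(l (1, 0), l (0, 1)), fun x => ?_⟩
      have : x = x.1 • ((1 : ℝ), (0 : ℝ)) + x.2 • ((0 : ℝ), (1 : ℝ)) := by ext <;> simp
      conv_lhs => rw [this]
      rw [map_add, map_smul, map_smul]
      simp only [smul_eq_mul]; ring
    have hmem : ∀ x ∈ newton (f * g), ∀ v : ℝ × ℝ, ‖v‖ ≤ δ →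
        x + v ∈ Metric.cthickening δ (newton (f * g)) := by
      intro x hx v hv
      refine Metric.mem_cthickening_of_dist_le (x + v) x δ _ hx ?_
      simpa [dist_eq_norm] using hv
    have h0 := hl _ (hmem _ (zero_mem_newton _) 0 (by simpa using hδ.le))
    rw [hw] at h0 hu
    simp only [Int.cast_natCast] at hu
    simp at h0
    have hm0 : (0 : ℝ) ≤ (m.1 0 : ℝ) / N := by positivity
    have hm1 : (0 : ℝ) ≤ (m.1 1 : ℝ) / N := by positivity
    have hW : 0 < w.1 ∨ 0 < w.2 := by
      by_contra hcon2
      push Not at hcon2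
      have a1 := mul_nonpos_of_nonpos_of_nonneg hcon2.1 hm0
      have a2 := mul_nonpos_of_nonpos_of_nonneg hcon2.2 hm1
      linarith
    obtain ⟨n, hn, hnw⟩ := exists_dw_mul w hf.ne_zero hg.ne_zero
    have hx := mem_newton hn
    have b1 := hl _ (hmem _ hx (δ, 0) (by simp [Prod.norm_def, abs_of_pos hδ, hδ.le]))
    have b2 := hl _ (hmem _ hx (0, δ) (by simp [Prod.norm_def, abs_of_pos hδ, hδ.le]))
    rw [hw] at b1 b2
    simp only [wt] at hnw
    simp at b1 b2
    have b3 : dw w f + dw w g + δ * max w.1 w.2 < u := by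
      rcases max_choice w.1 w.2 with h | h <;> rw [h] <;> linarith
    have hmx : 0 ≤ max w.1 w.2 := by
      rcases hW with h | h
      · exact h.le.trans (le_max_left _ _)
      · exact h.le.trans (le_max_right _ _)
    have b4 := m.2 w hW
    simp only [hfun, wt] at b4
    have b5 := mul_le_mul_of_nonneg_right hNδ hmx
    have b6 : w.1 * ((m.1 0 : ℝ) / N) + w.2 * ((m.1 1 : ℝ) / N) =
        (w.1 * (m.1 0 : ℝ) + w.2 * (m.1 1 : ℝ)) / N := by ring
    rw [b6, lt_div_iff₀ hN'] at hu
    have b7 := mul_lt_mul_of_pos_right b3 hN'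
    linarith
  · intro m n hmn
    simp only [Subtype.mk.injEq] at hmn
    ext i
    have := congrFun hmn i
    exact_mod_cast this

open Filter Topology in
lemma asymptotic {f g : P2} (hf : QuasiConvenient f) (hg : QuasiConvenient g) (t d : ℕ)
    (h : ∀ N : ℕ, (N : ℤ) ^ 2 * d + Nat.card (SS f g t N 0) + Nat.card (SS f g t 0 N) ≤
      Nat.card (SS f g t N N) + Nat.card (SS f g t 0 0)) : (d : ℝ) ≤ nuInf f g := by
  have main : ∀ δ : ℝ, 0 < δ → (d : ℝ) + area (newton f) + area (newton g) ≤
      area (Metric.cthickening δ (newton (f * g))) := by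
    intro δ hδ
    have T1 := count_tendsto _ (newton_compact f) (newton_convex f)
    have T2 := count_tendsto _ (newton_compact g) (newton_convex g)
    have T3 := count_tendsto _ ((newton_compact (f * g)).cthickening (r := δ))
      ((newton_convex (f * g)).cthickening δ)
    have T4 : Tendsto (fun N : ℕ => (Nat.card (SS f g t 0 0) : ℝ) / N ^ 2) atTop (𝓝 0) := by
      refine Tendsto.div_atTop tendsto_const_nhds ?_
      exact (tendsto_pow_atTop two_ne_zero).comp tendsto_natCast_atTop_atTop
    have T5 := T3.add T4
    rw [add_zero] at T5
    refine le_of_tendsto_of_tendsto ((tendsto_const_nhds (x := (d : ℝ))).add T1 |>.add T2) T5 ?_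
    obtain ⟨N₀, hN₀⟩ := exists_nat_ge (t / δ)
    filter_upwards [eventually_gt_atTop 0, eventually_ge_atTop N₀] with N hN hNN
    have hN' : (0 : ℝ) < N := by positivity
    have hNδ : (t : ℝ) ≤ N * δ := by
      rw [← div_le_iff₀ hδ]
      exact hN₀.trans (by exact_mod_cast hNN)
    have hmx : ∀ w : ℝ × ℝ, (0 < w.1 ∨ 0 < w.2) → 0 ≤ (t : ℝ) * max w.1 w.2 := by
      intro w hW
      refine mul_nonneg (Nat.cast_nonneg _) ?_
      rcases hW with h | h
      · exact h.le.trans (le_max_left _ _)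
      · exact h.le.trans (le_max_right _ _)
    have A1 := lower_count hf hN (SS f g t N 0) (SS_finite _ _ _ _ _) (by
      intro m hm w hw
      have := hm w hw
      have := hmx w hw
      simp only [hfun, Nat.cast_zero, zero_mul]
      linarith)
    have A2 := lower_count hg hN (SS f g t 0 N) (SS_finite _ _ _ _ _) (by
      intro m hm w hw
      have := hm w hw
      have := hmx w hw
      simp only [hfun, Nat.cast_zero, zero_mul]
      linarith)
    have A3 := upper_count hf hg hN hδ hNδ
    have A4 : (N : ℝ) ^ 2 * d + Nat.card (SS f g t N 0) + Nat.card (SS f g t 0 N) ≤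
      Nat.card (SS f g t N N) + Nat.card (SS f g t 0 0) := by exact_mod_cast h N
    have A1' := (Nat.cast_le (α := ℝ)).2 A1
    have A2' := (Nat.cast_le (α := ℝ)).2 A2
    have A3' := (Nat.cast_le (α := ℝ)).2 A3
    rw [← add_div, le_div_iff₀ (by positivity), add_mul, add_mul,
      div_mul_cancel₀ _ (by positivity), div_mul_cancel₀ _ (by positivity)]
    linarith
  have T := tendsto_measure_cthickening_of_isCompact (μ := (volume : Measure (ℝ × ℝ)))
    (newton_compact (f * g))
  have T' := (ENNReal.tendsto_toReal (newton_compact (f * g)).measure_lt_top.ne).comp T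
  have T'' := T'.mono_left (nhdsWithin_le_nhds (s := Set.Ioi 0))
  have fin := ge_of_tendsto T'' (b := (d : ℝ) + area (newton f) + area (newton g)) (by
    filter_upwards [self_mem_nhdsWithin] with δ hδ
    exact main δ hδ)
  simp only [nuInf]
  have : area (newton (f * g)) = (volume (newton (f * g))).toReal := rfl
  linarith

/-- the local quotient ring at a point -/
def BB (f g : P2) (Pt : ℂ × ℂ) : Type :=
  Localization.AtPrime (mIdeal Pt) ⧸
      Ideal.span {algebraMap P2 (Localization.AtPrime (mIdeal Pt)) f,
                  algebraMap P2 (Localization.AtPrime (mIdeal Pt)) g}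

instance (f g : P2) (Pt : ℂ × ℂ) : CommRing (BB f g Pt) :=
  inferInstanceAs (CommRing (_ ⧸ _))

instance (f g : P2) (Pt : ℂ × ℂ) : Algebra ℂ (BB f g Pt) :=
  inferInstanceAs (Algebra ℂ (Localization.AtPrime (mIdeal Pt) ⧸
      Ideal.span {algebraMap P2 (Localization.AtPrime (mIdeal Pt)) f,
                  algebraMap P2 (Localization.AtPrime (mIdeal Pt)) g}))

lemma interMult_eq (f g : P2) (Pt : ℂ × ℂ) :
    interMult f g Pt = Module.finrank ℂ (BB f g Pt) := rfl

/-- the canonical map to the local quotient ring -/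
def piB (f g : P2) (Pt : ℂ × ℂ) : P2 →ₐ[ℂ] BB f g Pt :=
  (Ideal.Quotient.mkₐ ℂ _).comp (IsScalarTower.toAlgHom ℂ P2 (Localization.AtPrime (mIdeal Pt)))

lemma piB_f (f g : P2) (Pt : ℂ × ℂ) : piB f g Pt f = 0 :=
  Ideal.Quotient.eq_zero_iff_mem.2 (Ideal.subset_span (by simp))

lemma piB_g (f g : P2) (Pt : ℂ × ℂ) : piB f g Pt g = 0 :=
  Ideal.Quotient.eq_zero_iff_mem.2 (Ideal.subset_span (by simp))

lemma piB_isUnit (f g : P2) (Pt : ℂ × ℂ) {s : P2} (hs : s ∉ mIdeal Pt) :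
    IsUnit (piB f g Pt s) := by
  have : IsUnit (algebraMap P2 (Localization.AtPrime (mIdeal Pt)) s) :=
    IsLocalization.map_units (M := (mIdeal Pt).primeCompl) _ ⟨s, hs⟩
  exact this.map (Ideal.Quotient.mkₐ ℂ (Ideal.span {algebraMap P2 (Localization.AtPrime (mIdeal Pt)) f,
                  algebraMap P2 (Localization.AtPrime (mIdeal Pt)) g}))

lemma piB_unit_range (f g : P2) (Pt : ℂ × ℂ) [Module.Finite ℂ (BB f g Pt)] {s : P2}
    (hs : s ∉ mIdeal Pt) : ∃ r : P2, piB f g Pt s * piB f g Pt r = 1 := by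
  have hu := piB_isUnit f g Pt hs
  let A := (piB f g Pt).range
  have : Module.Finite ℂ A := inferInstanceAs (Module.Finite ℂ (Subalgebra.toSubmodule A))
  let a : A := ⟨piB f g Pt s, s, rfl⟩
  have ha : a ∈ nonZeroDivisors A := by
    refine (mem_nonZeroDivisors_iff_right (M₀ := A)).2 ?_
    intro x hx
    have : (x : BB f g Pt) * piB f g Pt s = 0 := congrArg Subtype.val hx
    exact Subtype.ext ((hu.mul_left_eq_zero).1 this)
  obtain ⟨b, hb⟩ := (IsArtinianRing.isUnit_of_nonZeroDivisor_of_isIntegral' (R := ℂ)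
    ha).exists_right_inv
  obtain ⟨_, r, rfl⟩ := b
  exact ⟨r, congrArg Subtype.val hb⟩

lemma piB_frac (f g : P2) (Pt : ℂ × ℂ) (x : BB f g Pt) :
    ∃ a s : P2, s ∉ mIdeal Pt ∧ x * piB f g Pt s = piB f g Pt a := by
  obtain ⟨y, rfl⟩ := Ideal.Quotient.mk_surjective x
  obtain ⟨a, s, rfl⟩ := IsLocalization.exists_mk'_eq (mIdeal Pt).primeCompl y
  refine ⟨a, s, s.2, ?_⟩
  have h := IsLocalization.mk'_spec (Localization.AtPrime (mIdeal Pt)) a s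
  have h' := congrArg (Ideal.Quotient.mk (Ideal.span
    {algebraMap P2 (Localization.AtPrime (mIdeal Pt)) f,
     algebraMap P2 (Localization.AtPrime (mIdeal Pt)) g})) h
  rw [map_mul] at h'
  exact h'

lemma piB_surj (f g : P2) (Pt : ℂ × ℂ) [Module.Finite ℂ (BB f g Pt)] :
    Function.Surjective (piB f g Pt) := by
  intro x
  obtain ⟨a, s, hs, h⟩ := piB_frac f g Pt x
  obtain ⟨r, hr⟩ := piB_unit_range f g Pt hs
  refine ⟨a * r, ?_⟩
  rw [map_mul, ← h, mul_assoc, hr, mul_one]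

lemma mIdeal_inj {Pt Q : ℂ × ℂ} (h : mIdeal Pt = mIdeal Q) : Pt = Q := by
  have h0 : (X 0 - C Pt.1 : P2) ∈ mIdeal Pt := by simp [mIdeal, RingHom.mem_ker]
  have h1 : (X 1 - C Pt.2 : P2) ∈ mIdeal Pt := by simp [mIdeal, RingHom.mem_ker]
  rw [h] at h0 h1
  simp [mIdeal, RingHom.mem_ker, sub_eq_zero] at h0 h1
  exact Prod.ext h0.symm h1.symm

lemma coprime_ker (f g : P2) {Pt Q : ℂ × ℂ} [Module.Finite ℂ (BB f g Pt)]
    [Module.Finite ℂ (BB f g Q)] (h : Pt ≠ Q) :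
    IsCoprime (RingHom.ker (piB f g Pt)) (RingHom.ker (piB f g Q)) := by
  rw [Ideal.isCoprime_iff_sup_eq]
  by_contra hcon
  obtain ⟨M, hM, hle⟩ := Ideal.exists_le_maximal _ hcon
  have key : ∀ Pt : ℂ × ℂ, Module.Finite ℂ (BB f g Pt) → RingHom.ker (piB f g Pt) ≤ M →
      M = mIdeal Pt := by
    intro Pt _ hk
    refine hM.eq_of_le (Ideal.IsPrime.ne_top inferInstance) fun x hx => ?_
    by_contra hx'
    obtain ⟨r, hr⟩ := piB_unit_range f g Pt hx'
    have h1 : x * r - 1 ∈ RingHom.ker (piB f g Pt) := by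
      rw [RingHom.mem_ker, map_sub, map_mul, hr, map_one, sub_self]
    have h2 : (1 : P2) ∈ M := by
      have := M.sub_mem (M.mul_mem_right r hx) (hk h1)
      simpa using this
    exact hM.ne_top ((Ideal.eq_top_iff_one M).2 h2)
  apply h
  apply mIdeal_inj
  rw [← key Pt inferInstance (le_sup_left.trans hle), ← key Q inferInstance (le_sup_right.trans hle)]

lemma pi_surj (f g : P2) (S : Finset (ℂ × ℂ)) (hS : ∀ Pt ∈ S, Module.Finite ℂ (BB f g Pt)) :
    Function.Surjective (LinearMap.pi (fun Pt : S => (piB f g Pt.1).toLinearMap) :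
      P2 →ₗ[ℂ] (∀ Pt : S, BB f g Pt.1)) := by
  intro v
  have hfin : ∀ Pt : S, Module.Finite ℂ (BB f g Pt.1) := fun Pt => hS _ Pt.2
  choose p hp using fun Pt : S => piB_surj f g Pt.1 (v Pt)
  have hcop : Pairwise (Function.onFun IsCoprime
      (fun Pt : S => RingHom.ker (piB f g Pt.1))) := by
    intro a b hab
    exact coprime_ker f g (fun h => hab (Subtype.ext h))
  obtain ⟨r, hr⟩ := Ideal.pi_quotient_surjective hcop
    (fun Pt => Ideal.Quotient.mk _ (p Pt))
  refine ⟨r, ?_⟩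
  funext Pt
  have h1 := Ideal.Quotient.eq.1 (hr Pt)
  rw [RingHom.mem_ker, map_sub, sub_eq_zero] at h1
  rw [← hp Pt]
  exact h1

lemma exists_t {f g : P2} (hf : QuasiConvenient f) (hg : QuasiConvenient g) {V : Type*}
    [AddCommGroup V] [Module ℂ V] [Module.Finite ℂ V] (φ : P2 →ₗ[ℂ] V)
    (hφ : Function.Surjective φ) : ∃ t : ℕ, ∀ i j, (LL f g t i j).map φ = ⊤ := by
  classical
  obtain ⟨s, hs⟩ := (Module.Finite.fg_top : (⊤ : Submodule ℂ V).FG)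
  choose p hp using hφ
  refine ⟨s.sup (fun v => (p v).totalDegree), fun i j => ?_⟩
  rw [eq_top_iff, ← hs, Submodule.span_le]
  intro v hv
  exact ⟨p v, low_degree_mem hf hg (Finset.le_sup (f := fun v => (p v).totalDegree) hv), hp v⟩

lemma finset_bound {f g : P2} (hf : QuasiConvenient f) (hg : QuasiConvenient g)
    (hco : CoprimeDiv f g) (S : Finset (ℂ × ℂ))
    (hS : ∀ Pt ∈ S, Module.Finite ℂ (BB f g Pt)) :
    ((∑ Pt ∈ S, interMult f g Pt : ℕ) : ℝ) ≤ nuInf f g := by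
  have hfin : ∀ Pt : S, Module.Finite ℂ (BB f g Pt.1) := fun Pt => hS _ Pt.2
  set φ := (LinearMap.pi (fun Pt : S => (piB f g Pt.1).toLinearMap) :
      P2 →ₗ[ℂ] (∀ Pt : S, BB f g Pt.1)) with hφ
  obtain ⟨t, ht⟩ := exists_t (V := ∀ Pt : S, BB f g Pt.1) hf hg φ (pi_surj f g S hS)
  have hd : Module.finrank ℂ (∀ Pt : S, BB f g Pt.1) = ∑ Pt ∈ S, interMult f g Pt := by
    rw [Module.finrank_pi_fintype]
    exact Finset.sum_coe_sort S (fun Pt => interMult f g Pt)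
  have hstep := fun i j => dim_step hf.ne_zero hg.ne_zero hco φ
    (fun p => by funext Pt; simp [hφ, piB_f]) (fun p => by funext Pt; simp [hφ, piB_g]) t i j
    (ht _ _)
  rw [hd] at hstep
  refine asymptotic hf hg t _ fun N => ?_
  exact telescoping (fun i j => (Nat.card (SS f g t i j) : ℤ))
    ((∑ Pt ∈ S, interMult f g Pt : ℕ) : ℤ) (fun i j => by exact_mod_cast hstep i j) N

/-- Kouchnirenko–Bernstein theorem, upper bound. -/
theorem stmt12 (f g : P2) (hf : QuasiConvenient f) (hg : QuasiConvenient g)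
    (hco : CoprimeDiv f g) :
    ∑ᶠ Pt : ℂ × ℂ, (interMult f g Pt : ℝ) ≤ nuInf f g := by
  by_cases hfin : (Function.support fun Pt : ℂ × ℂ => (interMult f g Pt : ℝ)).Finite
  · rw [finsum_eq_sum _ hfin]
    have := finset_bound hf hg hco hfin.toFinset (by
      intro Pt hPt
      have h : interMult f g Pt ≠ 0 := by simpa using hPt
      rw [interMult_eq] at h
      exact Module.finite_of_finrank_pos (Nat.pos_of_ne_zero h))
    push_cast at this
    exact this
  · rw [finsum_of_infinite_support hfin]
    simpa using finset_bound hf hg hco ∅ (by simp)
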